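/- Chevalley's theorem (special case): Let K be an algebraically closed field and f = (f₁,…,fₙ) : Kᵐ → Kⁿ a polynomial map. Then the image of f is a constructible subset of Kⁿ in the Zariski topology. -/

import Mathlib

open MvPolynomial

/-- The Zariski topology on affine space `Fin n → K`. -/
def zariskiTopology (K : Type*) [CommRing K] (n : ℕ) :
    TopologicalSpace (Fin n → K) :=
  TopologicalSpace.generateFrom
    {U | ∃ p : MvPolynomial (Fin n) K, U = {x | eval x p ≠ 0}}

/-- A constructible set: a finite union of locally closed sets (in the Zariski
topology). -/
def IsZariskiConstructible {K : Type*} [CommRing K] {n : ℕ}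
    (C : Set (Fin n → K)) : Prop :=
  letI := zariskiTopology K n
  ∃ (m : ℕ) (u : Fin m → Set (Fin n → K)),
    (∀ i, IsLocallyClosed (u i)) ∧ C = ⋃ i, u i

theorem mem_range_iff_pointToPoint {K : Type*} [Field K] [IsAlgClosed K] {m n : ℕ}
    (f : Fin n → MvPolynomial (Fin m) K) (y : Fin n → K) :
    y ∈ Set.range (fun x : Fin m → K => fun i => eval x (f i)) ↔
      (pointToPoint y : PrimeSpectrum (MvPolynomial (Fin n) K)) ∈
        Set.range (PrimeSpectrum.comap (aeval f : MvPolynomial (Fin n) K →ₐ[K] _).toRingHom) := by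
  have key : ∀ (x : Fin m → K) (p : MvPolynomial (Fin n) K),
      aeval x (aeval f p) = aeval (fun i => eval x (f i)) p := by
    intro x p
    have : (aeval x : _ →ₐ[K] K).comp (aeval f) = aeval (fun i => eval x (f i)) := by
      ext i
      simp [aeval_eq_eval]
    exact DFunLike.congr_fun this p
  constructor
  · rintro ⟨x, rfl⟩
    refine ⟨pointToPoint x, ?_⟩
    apply PrimeSpectrum.ext
    ext p
    change aeval f p ∈ vanishingIdeal K {x} ↔ p ∈ vanishingIdeal K {fun i => eval x (f i)}
    rw [mem_vanishingIdeal_singleton_iff, mem_vanishingIdeal_singleton_iff, key]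
  · rintro ⟨P, hP⟩
    obtain ⟨M, hM, hPM⟩ := Ideal.exists_le_maximal P.asIdeal P.isPrime.ne_top
    obtain ⟨x, rfl⟩ := eq_vanishingIdeal_singleton_of_isMaximal K hM
    refine ⟨x, ?_⟩
    funext i
    have h1 : (X i - C (y i) : MvPolynomial (Fin n) K) ∈
        (pointToPoint y : PrimeSpectrum (MvPolynomial (Fin n) K)).asIdeal := by
      change _ ∈ vanishingIdeal K {y}
      rw [mem_vanishingIdeal_singleton_iff]
      simp
    rw [← hP] at h1
    have h2 : aeval f (X i - C (y i) : MvPolynomial (Fin n) K) ∈ vanishingIdeal K {x} := hPM h1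
    rw [mem_vanishingIdeal_singleton_iff, key] at h2
    simpa [sub_eq_zero] using h2

theorem isOpen_ne_zariski {K : Type*} [CommRing K] {n : ℕ} (p : MvPolynomial (Fin n) K) :
    @IsOpen _ (zariskiTopology K n) {x | eval x p ≠ 0} :=
  TopologicalSpace.isOpen_generateFrom_of_mem ⟨p, rfl⟩

theorem isLocallyClosed_basic {K : Type*} [Field K] {n : ℕ}
    (D : PrimeSpectrum.BasicConstructibleSetData (MvPolynomial (Fin n) K)) :
    letI := zariskiTopology K n
    IsLocallyClosed {y : Fin n → K |
      (pointToPoint y : PrimeSpectrum (MvPolynomial (Fin n) K)) ∈ D.toSet} := by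
  letI := zariskiTopology K n
  refine ⟨{x | eval x D.f ≠ 0}, ⋂ j, {x | eval x (D.g j) ≠ 0}ᶜ, isOpen_ne_zariski _,
    isClosed_iInter fun j => (isOpen_ne_zariski _).isClosed_compl, ?_⟩
  have h : ∀ (y : Fin n → K) (p : MvPolynomial (Fin n) K),
      p ∈ (pointToPoint y : PrimeSpectrum (MvPolynomial (Fin n) K)).asIdeal ↔ eval y p = 0 := by
    intro y p
    change p ∈ vanishingIdeal K {y} ↔ _
    rw [mem_vanishingIdeal_singleton_iff, aeval_eq_eval]
  ext y
  simp only [PrimeSpectrum.BasicConstructibleSetData.toSet, Set.mem_setOf_eq, Set.mem_diff,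
    PrimeSpectrum.mem_zeroLocus, Set.range_subset_iff, Set.singleton_subset_iff, SetLike.mem_coe, h,
    Set.mem_inter_iff, Set.mem_iInter, Set.mem_compl_iff, not_not, ne_eq]
  exact and_comm

/-- special case of Chevalley's theorem: over an algebraically
closed field, the image of a polynomial map `f : Kᵐ → Kⁿ` is a constructible
subset of `Kⁿ`. -/
theorem stmt11 (K : Type*) [Field K] [IsAlgClosed K] (m n : ℕ)
    (f : Fin n → MvPolynomial (Fin m) K) :
    IsZariskiConstructible
      (Set.range (fun x : Fin m → K => fun i => eval x (f i))) := by
  have hfp : (aeval f : MvPolynomial (Fin n) K →ₐ[K] MvPolynomial (Fin m) K).toRingHom.FinitePresentation := by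
    rw [← RingHom.FinitePresentation.of_finiteType]
    apply RingHom.FiniteType.of_comp_finiteType (f := (C : K →+* MvPolynomial (Fin n) K))
    have : (aeval f : MvPolynomial (Fin n) K →ₐ[K] MvPolynomial (Fin m) K).toRingHom.comp C
        = algebraMap K (MvPolynomial (Fin m) K) := by
      ext a; simp [algebraMap_eq]
    rw [this, RingHom.finiteType_algebraMap]
    infer_instance
  obtain ⟨S, hS⟩ := PrimeSpectrum.exists_constructibleSetData_iff.2
    (PrimeSpectrum.isConstructible_range_comap hfp)
  refine ⟨S.card, fun i => {y | (pointToPoint y : PrimeSpectrum (MvPolynomial (Fin n) K)) ∈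
    (S.equivFin.symm i).1.toSet}, fun i => isLocallyClosed_basic _, ?_⟩
  ext y
  rw [mem_range_iff_pointToPoint, ← hS]
  simp only [PrimeSpectrum.ConstructibleSetData.toSet, Set.mem_iUnion, Set.mem_setOf_eq]
  constructor
  · rintro ⟨D, hD, h⟩
    exact ⟨S.equivFin ⟨D, hD⟩, by simpa using h⟩
  · rintro ⟨i, h⟩
    exact ⟨_, (S.equivFin.symm i).2, h⟩
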